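/- arXiv:2505.04796 — 2 statements merged into one kernel-verified Lean document; each statement's English description precedes it below -/
import Mathlib

section
/- Let n ≥ 1 and 0 < δ ≤ τ. In ℝⁿ, let F = {x : x₀ = 0}, let c = δ·e₀, let B = closedBall(c, τ), and let π(x) = x − x₀·e₀ be the orthogonal projection onto F. Then the probability, under the uniform distribution on B, that the projection of a point falls outside B satisfies volume({x ∈ B : π(x) ∉ B}) / volume(B) = 1 − (1/Wₙ)·( ∫₀^{arccos(δ/τ)} sinⁿθ dθ + (δ/τ)·(1 − δ²/τ²)^{(n−1)/2} ), where Wₙ = ∫₀^{π/2} sinⁿθ dθ. -/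
open MeasureTheory Real

open Module (finrank)
open Metric (closedBall ball)
open scoped RealInnerProductSpace

/-! Let `ρ = √(τ² - δ²)`. By Pythagoras the projection of a point of `B` stays in `B` exactly when
the point lies within distance `ρ` of the normal line through the centre, so the undetected points
are those of `B` inside a solid cylinder. Its slice at height `t` above the centre is a ball of
dimension `n - 1` and radius `min √(τ² - t²) ρ`, so Fubini reduces the volume to a one-dimensional
integral, and `t = τ cos θ` turns that into the integral of
`min (sin θ) (ρ / τ) ^ (n - 1) * sin θ`. -/

/-- The Wallis-type integral `∫₀^{π/2} min(sin θ, s)ᵐ sin θ dθ`. Up to a factor which does not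
depend on `s`, it is the volume of the part of the unit ball of dimension `m + 1` that lies in the
solid cylinder of radius `s` around a diameter. -/
noncomputable def truncatedWallis (m : ℕ) (s : ℝ) : ℝ :=
  ∫ θ in 0..π / 2, min (sin θ) s ^ m * sin θ

theorem truncatedWallis_sin (m : ℕ) {α : ℝ} (h₀ : 0 ≤ α) (h₁ : α ≤ π / 2) :
    truncatedWallis m (sin α) = (∫ θ in 0..α, sin θ ^ (m + 1)) + cos α * sin α ^ m := by
  have sin_le_sin {x y : ℝ} (hx : 0 ≤ x) (hy : y ≤ π / 2) (hxy : x ≤ y) : sin x ≤ sin y :=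
    sin_le_sin_of_le_of_le_pi_div_two (by linarith [pi_pos]) hy hxy
  have hcont : Continuous fun θ => min (sin θ) (sin α) ^ m * sin θ := by fun_prop
  have below : ∫ θ in 0..α, min (sin θ) (sin α) ^ m * sin θ = ∫ θ in 0..α, sin θ ^ (m + 1) := by
    refine intervalIntegral.integral_congr fun θ hθ => ?_
    rw [Set.uIcc_of_le h₀] at hθ
    simp only [min_eq_left (sin_le_sin hθ.1 h₁ hθ.2), pow_succ]
  have above : ∫ θ in α..π / 2, min (sin θ) (sin α) ^ m * sin θ
      = ∫ θ in α..π / 2, sin α ^ m * sin θ := by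
    refine intervalIntegral.integral_congr fun θ hθ => ?_
    rw [Set.uIcc_of_le h₁] at hθ
    simp only [min_eq_right (sin_le_sin h₀ hθ.2 hθ.1)]
  rw [truncatedWallis, ← intervalIntegral.integral_add_adjacent_intervals
    (hcont.intervalIntegrable 0 α) (hcont.intervalIntegrable α _), below, above,
    intervalIntegral.integral_const_mul, integral_sin, cos_pi_div_two, sub_zero, mul_comm (cos α)]

theorem truncatedWallis_one (m : ℕ) :
    truncatedWallis m 1 = ∫ θ in 0..π / 2, sin θ ^ (m + 1) := by
  simpa using truncatedWallis_sin m pi_div_two_pos.le le_rfl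

theorem truncatedWallis_nonneg (m : ℕ) {s : ℝ} (hs : 0 ≤ s) : 0 ≤ truncatedWallis m s := by
  refine intervalIntegral.integral_nonneg pi_div_two_pos.le fun θ hθ => ?_
  have hsin : 0 ≤ sin θ := sin_nonneg_of_nonneg_of_le_pi hθ.1 (by linarith [hθ.2, pi_pos])
  positivity

theorem integral_neg_self_eq_two_mul_of_even {f : ℝ → ℝ} (hf : Continuous f)
    (heven : Function.Even f) (r : ℝ) : ∫ t in -r..r, f t = 2 * ∫ t in 0..r, f t := by
  have hneg : ∫ t in -r..0, f t = ∫ t in 0..r, f t := by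
    simpa [heven _] using (intervalIntegral.integral_comp_neg (a := 0) (b := r) f).symm
  rw [← intervalIntegral.integral_add_adjacent_intervals (hf.intervalIntegrable _ 0)
    (hf.intervalIntegrable _ _), hneg, two_mul]

theorem integral_min_sqrt_pow (m : ℕ) {r : ℝ} (hr : 0 ≤ r) (s : ℝ) :
    ∫ t in -r..r, min √(r ^ 2 - t ^ 2) (r * s) ^ m
      = 2 * r ^ (m + 1) * truncatedWallis m s := by
  have hcont : Continuous fun t : ℝ => min √(r ^ 2 - t ^ 2) (r * s) ^ m := by fun_prop
  have hderiv (θ : ℝ) : HasDerivAt (fun θ => r * cos θ) (r * -sin θ) θ :=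
    (hasDerivAt_cos θ).const_mul r
  have hsubst := intervalIntegral.integral_comp_mul_deriv (a := 0) (b := π / 2)
    (fun θ _ => hderiv θ) (by fun_prop) hcont
  have hsqrt : ∀ θ ∈ Set.uIcc 0 (π / 2), √(r ^ 2 - (r * cos θ) ^ 2) = r * sin θ := by
    intro θ hθ
    rw [Set.uIcc_of_le pi_div_two_pos.le] at hθ
    have hsin : 0 ≤ sin θ := sin_nonneg_of_nonneg_of_le_pi hθ.1 (by linarith [hθ.2, pi_pos])
    rw [← sqrt_sq (mul_nonneg hr hsin), mul_pow, mul_pow, sin_sq]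
    ring_nf
  rw [cos_zero, cos_pi_div_two, mul_one, mul_zero] at hsubst
  rw [integral_neg_self_eq_two_mul_of_even hcont (fun t => by simp only [neg_sq]), mul_assoc,
    intervalIntegral.integral_symm, ← hsubst, ← intervalIntegral.integral_neg, truncatedWallis,
    ← intervalIntegral.integral_const_mul (r ^ (m + 1))]
  congr 1
  refine intervalIntegral.integral_congr fun θ hθ => ?_
  rw [Function.comp_apply, hsqrt θ hθ, ← mul_min_of_nonneg _ _ hr]
  ring

theorem sin_arccos_pow_eq_rpow {x : ℝ} (hx : x ^ 2 ≤ 1) (m : ℕ) :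
    sin (arccos x) ^ m = (1 - x ^ 2) ^ ((m : ℝ) / 2) := by
  rw [sin_arccos, rpow_div_two_eq_sqrt _ (sub_nonneg.2 hx), rpow_natCast]

theorem truncatedWallis_sin_arccos (m : ℕ) {x : ℝ} (h₀ : 0 ≤ x) (h₁ : x ≤ 1) :
    truncatedWallis m (sin (arccos x))
      = (∫ θ in 0..arccos x, sin θ ^ (m + 1)) + x * (1 - x ^ 2) ^ ((m : ℝ) / 2) := by
  rw [truncatedWallis_sin m (arccos_nonneg x) (arccos_le_pi_div_two.2 h₀),
    cos_arccos (by linarith) h₁, sin_arccos_pow_eq_rpow ((sq_le_one_iff₀ h₀).2 h₁)]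

theorem sqrt_sq_sub_sq_eq_mul_sin_arccos {r : ℝ} (hr : 0 < r) (d : ℝ) :
    √(r ^ 2 - d ^ 2) = r * sin (arccos (d / r)) := by
  have hfactor : r ^ 2 - d ^ 2 = r ^ 2 * (1 - (d / r) ^ 2) := by field_simp
  rw [sin_arccos, hfactor, sqrt_mul (sq_nonneg r), sqrt_sq hr.le]

section InnerProductSpace

variable {E : Type*} [NormedAddCommGroup E] [InnerProductSpace ℝ E]

/-- The solid cylinder of radius `ρ` through `c` whose base lies along `U`, that is, the points at
distance at most `ρ` from the affine subspace through `c` orthogonal to `U`. -/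
def solidCylinder (U : Submodule ℝ E) [U.HasOrthogonalProjection] (c : E) (ρ : ℝ) : Set E :=
  {x | ‖U.starProjection (x - c)‖ ≤ ρ}

section Projection

variable (U : Submodule ℝ E) [U.HasOrthogonalProjection] (c : E)

theorem isClosed_solidCylinder (ρ : ℝ) : IsClosed (solidCylinder U c ρ) :=
  isClosed_le (by fun_prop) continuous_const

theorem closedBall_subset_solidCylinder (r : ℝ) : closedBall c r ⊆ solidCylinder U c r :=
  fun x hx => (U.norm_starProjection_apply_le (x - c)).trans (mem_closedBall_iff_norm.1 hx)

theorem norm_starProjection_sub_sq (x : E) :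
    ‖U.starProjection x - c‖ ^ 2
      = ‖U.starProjection (x - c)‖ ^ 2 + ‖c - U.starProjection c‖ ^ 2 := by
  have hidem (z : E) : U.starProjection (U.starProjection z) = U.starProjection z :=
    U.starProjection_eq_self_iff.2 (U.starProjection_apply_mem z)
  rw [U.norm_sq_eq_add_norm_sq_starProjection (U.starProjection x - c),
    Submodule.starProjection_orthogonal_val]
  simp only [map_sub, hidem]
  rw [sub_sub_sub_cancel_left, norm_sub_rev (U.starProjection c)]

theorem starProjection_preimage_closedBall {r : ℝ} (hr : ‖c - U.starProjection c‖ ≤ r) :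
    U.starProjection ⁻¹' closedBall c r
      = solidCylinder U c √(r ^ 2 - ‖c - U.starProjection c‖ ^ 2) := by
  have hr₀ : 0 ≤ r := (norm_nonneg _).trans hr
  ext x
  rw [Set.mem_preimage, mem_closedBall_iff_norm, ← sq_le_sq₀ (norm_nonneg _) hr₀,
    norm_starProjection_sub_sq, solidCylinder, Set.mem_ofPred_eq,
    le_sqrt (norm_nonneg _) (sub_nonneg.2 (by gcongr)), le_sub_iff_add_le]

end Projection

section Slices

variable {e : E} (he : ‖e‖ = 1)

include he

theorem norm_sub_starProjection_orthogonal_singleton (x : E) :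
    ‖x - (ℝ ∙ e)ᗮ.starProjection x‖ = |⟪e, x⟫| := by
  rw [Submodule.starProjection_orthogonal_val, sub_sub_cancel,
    Submodule.starProjection_unit_singleton ℝ he, norm_smul, he, mul_one, norm_eq_abs]

theorem norm_smul_add_orthogonal_sq (t : ℝ) (y : (ℝ ∙ e)ᗮ) :
    ‖t • e + (y : E)‖ ^ 2 = t ^ 2 + ‖y‖ ^ 2 := by
  have horth : ⟪t • e, (y : E)⟫ = 0 := by
    rw [real_inner_smul_left, Submodule.mem_orthogonal_singleton_iff_inner_right.1 y.2, mul_zero]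
  rw [norm_add_sq_real, horth, norm_smul, he]
  simp

theorem slice_closedBall_inter_solidCylinder (c : E) {r ρ : ℝ} (hr : 0 ≤ r) (t : ℝ) :
    {y : (ℝ ∙ e)ᗮ | c + (t • e + y) ∈ closedBall c r ∩ solidCylinder (ℝ ∙ e)ᗮ c ρ}
      = if t ∈ Set.Icc (-r) r then closedBall 0 (min √(r ^ 2 - t ^ 2) ρ) else ∅ := by
  ext y
  have hball : c + (t • e + y) ∈ closedBall c r ↔ ‖y‖ ^ 2 ≤ r ^ 2 - t ^ 2 := by
    rw [mem_closedBall_iff_norm, add_sub_cancel_left, ← sq_le_sq₀ (norm_nonneg _) hr,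
      norm_smul_add_orthogonal_sq he, le_sub_iff_add_le']
  have hcyl : c + (t • e + y) ∈ solidCylinder (ℝ ∙ e)ᗮ c ρ ↔ ‖y‖ ≤ ρ := by
    rw [solidCylinder, Set.mem_ofPred_eq, add_sub_cancel_left, map_add, map_smul,
      Submodule.starProjection_orthogonalComplement_singleton_eq_zero, smul_zero, zero_add,
      Submodule.starProjection_eq_self_iff.2 y.2, Submodule.coe_norm]
  rw [Set.mem_ofPred_eq, Set.mem_inter_iff, hball, hcyl]
  split_ifs with ht
  · rw [mem_closedBall_zero_iff, le_min_iff,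
      le_sqrt (norm_nonneg _) (sub_nonneg.2 (sq_le_sq' ht.1 ht.2))]
  · refine iff_of_false (fun h => ht (abs_le.1 (abs_le_of_sq_le_sq ?_ hr))) (Set.notMem_empty y)
    linarith [h.1, sq_nonneg ‖y‖]

end Slices

variable [FiniteDimensional ℝ E] [MeasurableSpace E] [BorelSpace E]
variable {e : E} (he : ‖e‖ = 1) (c : E)

include he

theorem measurePreserving_add_smul_add_orthogonal :
    MeasurePreserving fun q : ℝ × (ℝ ∙ e)ᗮ => c + (q.1 • e + q.2) := by
  have hline := (LinearIsometryEquiv.toSpanUnitSingleton (𝕜 := ℝ) e he).measurePreserving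
  have hsum := (ℝ ∙ e).orthogonalDecomposition.symm.measurePreserving.comp
    (WithLp.volume_preserving_toLp _ _)
  exact (measurePreserving_add_left volume c).comp
    (hsum.comp (hline.prod (MeasurePreserving.id volume)))

theorem volume_eq_lintegral_orthogonal_slices {A : Set E} (hA : MeasurableSet A) :
    volume A = ∫⁻ t : ℝ, volume {y : (ℝ ∙ e)ᗮ | c + (t • e + y) ∈ A} := by
  have hmp := measurePreserving_add_smul_add_orthogonal he c
  rw [← hmp.measure_preimage hA.nullMeasurableSet, Measure.volume_eq_prod,
    Measure.prod_apply (hmp.measurable hA)]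
  rfl

theorem volume_closedBall_inter_solidCylinder {r s : ℝ} (hr : 0 ≤ r) (hs : 0 ≤ s) :
    volume (closedBall c r ∩ solidCylinder (ℝ ∙ e)ᗮ c (r * s))
      = ENNReal.ofReal (2 * r ^ (finrank ℝ (ℝ ∙ e)ᗮ + 1) * truncatedWallis (finrank ℝ (ℝ ∙ e)ᗮ) s)
        * volume (ball (0 : (ℝ ∙ e)ᗮ) 1) := by
  set m := finrank ℝ (ℝ ∙ e)ᗮ
  set f : ℝ → ℝ := fun t => min √(r ^ 2 - t ^ 2) (r * s) ^ m
  have hf : Continuous f := by fun_prop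
  have hf₀ (t : ℝ) : 0 ≤ f t := by positivity
  have hslice (t : ℝ) :
      volume {y : (ℝ ∙ e)ᗮ | c + (t • e + y) ∈ closedBall c r ∩ solidCylinder (ℝ ∙ e)ᗮ c (r * s)}
        = (Set.Icc (-r) r).indicator (fun t => ENNReal.ofReal (f t)) t
          * volume (ball (0 : (ℝ ∙ e)ᗮ) 1) := by
    rw [slice_closedBall_inter_solidCylinder he c hr, Set.indicator_apply]
    split_ifs
    · exact Measure.addHaar_closedBall _ _ (by positivity)
    · rw [measure_empty, zero_mul]
  rw [volume_eq_lintegral_orthogonal_slices he c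
      (Metric.isClosed_closedBall.inter (isClosed_solidCylinder _ _ _)).measurableSet,
    lintegral_congr hslice, lintegral_mul_const _
      ((by fun_prop : Measurable fun t => ENNReal.ofReal (f t)).indicator measurableSet_Icc),
    lintegral_indicator measurableSet_Icc, ← integral_min_sqrt_pow m hr,
    intervalIntegral.integral_of_le (by linarith), ← integral_Icc_eq_integral_Ioc,
    ofReal_integral_eq_lintegral_ofReal hf.continuousOn.integrableOn_Icc
      (Filter.Eventually.of_forall hf₀)]

theorem volume_real_closedBall_inter_solidCylinder_div {r s : ℝ} (hr : 0 < r) (hs : 0 ≤ s) :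
    volume.real (closedBall c r ∩ solidCylinder (ℝ ∙ e)ᗮ c (r * s)) / volume.real (closedBall c r)
      = truncatedWallis (finrank ℝ (ℝ ∙ e)ᗮ) s / truncatedWallis (finrank ℝ (ℝ ∙ e)ᗮ) 1 := by
  set m := finrank ℝ (ℝ ∙ e)ᗮ
  have hκ : 0 < volume.real (ball (0 : (ℝ ∙ e)ᗮ) 1) :=
    ENNReal.toReal_pos (Metric.measure_ball_pos _ _ one_pos).ne' measure_ball_lt_top.ne
  have hvol {u : ℝ} (hu : 0 ≤ u) :
      volume.real (closedBall c r ∩ solidCylinder (ℝ ∙ e)ᗮ c (r * u))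
        = 2 * r ^ (m + 1) * truncatedWallis m u * volume.real (ball (0 : (ℝ ∙ e)ᗮ) 1) := by
    have := truncatedWallis_nonneg m hu
    rw [measureReal_def, volume_closedBall_inter_solidCylinder he c hr.le hu, ENNReal.toReal_mul,
      ENNReal.toReal_ofReal (by positivity), measureReal_def]
  have hball := hvol zero_le_one
  rw [mul_one, Set.inter_eq_left.2 (closedBall_subset_solidCylinder _ c r)] at hball
  rw [hvol hs, hball, mul_div_mul_right _ _ hκ.ne', mul_div_mul_left _ _ (by positivity)]

/-- The hyperplane is given by a unit normal `e`, so its distance `δ` from the centre `c` is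
`|⟪e, c⟫|`. -/
theorem detection_rate_formula_general {n : ℕ} (hn : finrank ℝ E = n) {δ τ : ℝ} (hτ : 0 < τ)
    (hδ : |⟪e, c⟫| = δ) (hδτ : δ ≤ τ) :
    (volume {x ∈ closedBall c τ | (ℝ ∙ e)ᗮ.starProjection x ∉ closedBall c τ}
        / volume (closedBall c τ)).toReal =
      1 - (1 / ∫ θ in (0 : ℝ)..(π / 2), sin θ ^ n) *
        ((∫ θ in (0 : ℝ)..(arccos (δ / τ)), sin θ ^ n)
          + (δ / τ) * (1 - δ ^ 2 / τ ^ 2) ^ (((n : ℝ) - 1) / 2)) := by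
  have hδ₀ : 0 ≤ δ := hδ ▸ abs_nonneg _
  set m := finrank ℝ (ℝ ∙ e)ᗮ
  have hmn : n = m + 1 := by
    rw [← hn, ← (ℝ ∙ e).finrank_add_finrank_orthogonal,
      finrank_span_singleton (norm_ne_zero_iff.1 (by simp [he])), add_comm]
  set s := sin (arccos (δ / τ))
  have hundetected : (ℝ ∙ e)ᗮ.starProjection ⁻¹' closedBall c τ
      = solidCylinder (ℝ ∙ e)ᗮ c (τ * s) := by
    have hdist : ‖c - (ℝ ∙ e)ᗮ.starProjection c‖ = δ := by
      rw [norm_sub_starProjection_orthogonal_singleton he, hδ]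
    rw [starProjection_preimage_closedBall _ _ (hdist.trans_le hδτ), hdist,
      sqrt_sq_sub_sq_eq_mul_sin_arccos hτ]
  have hwallis : truncatedWallis m s = (∫ θ in 0..arccos (δ / τ), sin θ ^ n)
      + (δ / τ) * (1 - δ ^ 2 / τ ^ 2) ^ (((n : ℝ) - 1) / 2) := by
    rw [truncatedWallis_sin_arccos m (by positivity) ((div_le_one hτ).2 hδτ), div_pow, hmn,
      Nat.cast_succ, add_sub_cancel_right]
  have hball : 0 < volume.real (closedBall c τ) :=
    ENNReal.toReal_pos (Metric.measure_closedBall_pos _ _ hτ).ne' measure_closedBall_lt_top.ne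
  calc _ = volume.real (closedBall c τ \ solidCylinder (ℝ ∙ e)ᗮ c (τ * s))
          / volume.real (closedBall c τ) := by
        rw [ENNReal.toReal_div, ← hundetected]
        rfl
    _ = 1 - volume.real (closedBall c τ ∩ solidCylinder (ℝ ∙ e)ᗮ c (τ * s))
          / volume.real (closedBall c τ) := by
        have hcyl := (isClosed_solidCylinder (ℝ ∙ e)ᗮ c (τ * s)).measurableSet
        rw [eq_sub_of_add_eq (measureReal_sdiff_add_inter hcyl measure_closedBall_lt_top.ne),
          sub_div, div_self hball.ne']
    _ = 1 - truncatedWallis m s / truncatedWallis m 1 := by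
        rw [volume_real_closedBall_inter_solidCylinder_div he c hτ
          (sin_nonneg_of_nonneg_of_le_pi (arccos_nonneg _) (arccos_le_pi _))]
    _ = _ := by
        rw [hwallis, truncatedWallis_one, ← hmn, one_div_mul_eq_div]

end InnerProductSpace

theorem starProjection_orthogonal_single {ι : Type*} [Fintype ι] [DecidableEq ι] (i : ι)
    (x : EuclideanSpace ℝ ι) :
    (ℝ ∙ EuclideanSpace.single i (1 : ℝ))ᗮ.starProjection x
      = x - x i • EuclideanSpace.single i (1 : ℝ) := by
  rw [Submodule.starProjection_orthogonal_val,
    Submodule.starProjection_unit_singleton ℝ (by simp), EuclideanSpace.inner_single_left]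
  simp

/-- Prior-uniform detection rate: with `F = {x : x₀ = 0}`, `c = δ·e₀`,
`B = closedBall(c, τ)` and `π(x) = x − x₀·e₀`, for `0 < δ ≤ τ`,
`volume {x ∈ B : π(x) ∉ B} / volume B
  = 1 − (1/Wₙ)·(∫₀^{arccos(δ/τ)} sinⁿθ dθ + (δ/τ)·(1 − δ²/τ²)^{(n−1)/2})`. -/
theorem detection_rate_formula {n : ℕ} (hn : 1 ≤ n) (δ τ : ℝ) (hδ : 0 < δ) (hδτ : δ ≤ τ) :
    let e₀ : EuclideanSpace ℝ (Fin n) := EuclideanSpace.single ⟨0, hn⟩ 1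
    let c : EuclideanSpace ℝ (Fin n) := δ • e₀
    let B : Set (EuclideanSpace ℝ (Fin n)) := Metric.closedBall c τ
    let proj : EuclideanSpace ℝ (Fin n) → EuclideanSpace ℝ (Fin n) :=
      fun x => x - x ⟨0, hn⟩ • e₀
    let W : ℝ := ∫ θ in (0:ℝ)..(Real.pi / 2), Real.sin θ ^ n
    (volume {x ∈ B | proj x ∉ B} / volume B).toReal =
      1 - (1 / W) *
        ((∫ θ in (0:ℝ)..(Real.arccos (δ / τ)), Real.sin θ ^ n)
          + (δ / τ) * (1 - δ ^ 2 / τ ^ 2) ^ (((n : ℝ) - 1) / 2)) := by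
  intro e₀ c B proj W
  have hproj : proj = (ℝ ∙ e₀)ᗮ.starProjection :=
    funext fun x => (starProjection_orthogonal_single _ x).symm
  rw [hproj]
  exact detection_rate_formula_general (by simp [e₀] : ‖e₀‖ = 1) c finrank_euclideanSpace_fin
    (hδ.trans_le hδτ) (by simp [e₀, c, real_inner_smul_right, abs_of_pos hδ]) hδτ
end

section
/- Let n ≥ 1 and 0 < δ ≤ τ. In ℝⁿ, let F = {x : x₀ = 0}, c = δ·e₀, B = closedBall(c, τ), and π(x) = x − x₀·e₀. Then volume({x ∈ B : π(x) ∉ B}) / volume(B) = (1/Wₙ)·( ∫₀^{δ/τ} (1 − u²)^{(n−1)/2} du − (δ/τ)·(1 − δ²/τ²)^{(n−1)/2} ), where Wₙ = ∫₀^{π/2} sinⁿθ dθ. -/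
open MeasureTheory Real

/-!
Split `x - c` into its components along `F` and `Fᗮ`. By Pythagoras, a point `x` of the ball has
its projection outside the ball exactly when it lies outside the cylinder where the `F`-component is
at most `√(τ² - δ²)`, and then its `Fᗮ`-component is at most `δ`. The ball, its slab of half-width
`δ` and the cylinder inscribed in that slab are bodies of revolution about `c + Fᗮ`: their
cross-sections parallel to `F` are balls, so slicing and then polar coordinates in `Fᗮ` turn each
volume into the same constant times a one-dimensional integral. The constant cancels in the ratio,
and `u = cos θ` turns the integral of the full ball into the Wallis integral.
-/

open Metric Module Set

variable {E : Type*} [NormedAddCommGroup E] [InnerProductSpace ℝ E]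

/-- The body of revolution with centre `c`, axis `c + Fᗮ` (of any dimension) and profile `r`: its
cross-section parallel to `F` through an axis point at distance `s ≤ a` from `c` is the closed ball
of radius `r s` around that point. -/
def bodyOfRevolution (F : Submodule ℝ E) [F.HasOrthogonalProjection] (c : E) (a : ℝ)
    (r : ℝ → ℝ) : Set E :=
  {x | ‖Fᗮ.starProjection (x - c)‖ ≤ a ∧
    ‖F.starProjection (x - c)‖ ≤ r ‖Fᗮ.starProjection (x - c)‖}

section Geometry

variable (F : Submodule ℝ E) [F.HasOrthogonalProjection]

theorem mem_closedBall_iff_norm_sq_starProjection {c x : E} {τ : ℝ} (hτ : 0 ≤ τ) :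
    x ∈ closedBall c τ ↔
      ‖F.starProjection (x - c)‖ ^ 2 + ‖Fᗮ.starProjection (x - c)‖ ^ 2 ≤ τ ^ 2 := by
  rw [mem_closedBall_iff_norm, ← sq_le_sq₀ (norm_nonneg _) hτ,
    F.norm_sq_eq_add_norm_sq_starProjection]

theorem starProjection_mem_closedBall_iff {c x : E} {τ : ℝ} (hτ : 0 ≤ τ) :
    F.starProjection x ∈ closedBall c τ ↔
      ‖F.starProjection (x - c)‖ ^ 2 + dist c (F.starProjection c) ^ 2 ≤ τ ^ 2 := by
  have hF : F.starProjection (F.starProjection x - c) = F.starProjection (x - c) := by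
    simp [map_sub, F.starProjection_eq_self_iff.mpr (F.starProjection_apply_mem x)]
  have hFc : ‖Fᗮ.starProjection (F.starProjection x - c)‖ = dist c (F.starProjection c) := by
    rw [F.starProjection_orthogonal_val, hF, map_sub, dist_eq_norm, ← norm_neg]
    congr 1
    abel
  rw [mem_closedBall_iff_norm_sq_starProjection F hτ, hF, hFc]

theorem bodyOfRevolution_mono (c : E) {a : ℝ} {r r' : ℝ → ℝ}
    (h : ∀ s ∈ Icc 0 a, r s ≤ r' s) : bodyOfRevolution F c a r ⊆ bodyOfRevolution F c a r' :=
  fun _ hx ↦ ⟨hx.1, hx.2.trans (h _ ⟨norm_nonneg _, hx.1⟩)⟩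

theorem bodyOfRevolution_sqrt_sub_sq (c : E) {a τ : ℝ} (hτ : 0 ≤ τ) (ha : a ≤ τ) :
    bodyOfRevolution F c a (fun s ↦ √(τ ^ 2 - s ^ 2)) =
      {x ∈ closedBall c τ | ‖Fᗮ.starProjection (x - c)‖ ≤ a} := by
  ext x
  rw [mem_ofPred, and_comm, mem_closedBall_iff_norm_sq_starProjection F hτ, ← le_sub_iff_add_le]
  refine and_congr_right fun hx ↦ Real.le_sqrt (norm_nonneg _) ?_
  rw [sub_nonneg]
  gcongr
  exact hx.trans ha

theorem closedBall_eq_bodyOfRevolution (c : E) {τ : ℝ} (hτ : 0 ≤ τ) :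
    closedBall c τ = bodyOfRevolution F c τ fun s ↦ √(τ ^ 2 - s ^ 2) := by
  rw [bodyOfRevolution_sqrt_sub_sq F c hτ le_rfl, eq_comm, sep_eq_self_iff_mem_true]
  exact fun x hx ↦ (Fᗮ.norm_starProjection_apply_le _).trans (mem_closedBall_iff_norm.mp hx)

theorem setOf_starProjection_notMem_closedBall {c : E} {δ τ : ℝ}
    (hδ : dist c (F.starProjection c) = δ) (hδτ : δ ≤ τ) :
    {x ∈ closedBall c τ | F.starProjection x ∉ closedBall c τ} =
      bodyOfRevolution F c δ (fun s ↦ √(τ ^ 2 - s ^ 2)) \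
        bodyOfRevolution F c δ fun _ ↦ √(τ ^ 2 - δ ^ 2) := by
  have hδ₀ : 0 ≤ δ := hδ ▸ dist_nonneg
  have hτ : 0 ≤ τ := hδ₀.trans hδτ
  have hδτ_sq : δ ^ 2 ≤ τ ^ 2 := by gcongr
  rw [bodyOfRevolution_sqrt_sub_sq F c hτ hδτ]
  ext x
  have hproj : F.starProjection x ∈ closedBall c τ ↔
      ‖F.starProjection (x - c)‖ ≤ √(τ ^ 2 - δ ^ 2) := by
    rw [starProjection_mem_closedBall_iff F hτ, hδ, ← le_sub_iff_add_le,
      Real.le_sqrt (norm_nonneg _) (sub_nonneg.mpr hδτ_sq)]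
  have hslab (hx : x ∈ closedBall c τ) (hPx : F.starProjection x ∉ closedBall c τ) :
      ‖Fᗮ.starProjection (x - c)‖ ≤ δ := by
    rw [mem_closedBall_iff_norm_sq_starProjection F hτ] at hx
    rw [starProjection_mem_closedBall_iff F hτ, hδ, not_le] at hPx
    exact le_of_sq_le_sq (by linarith) hδ₀
  simp only [bodyOfRevolution, mem_sdiff, mem_ofPred, hproj] at hslab ⊢
  tauto

theorem slice_bodyOfRevolution (c : E) (a : ℝ) (r : ℝ → ℝ) (z : Fᗮ) :
    {y : F | (y + z : E) + c ∈ bodyOfRevolution F c a r} =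
      if ‖z‖ ≤ a then closedBall 0 (r ‖z‖) else ∅ := by
  have hz : F.starProjection (z : E) = 0 := F.starProjection_apply_eq_zero_iff.mpr z.2
  ext y
  split_ifs with hza <;> simp_all [bodyOfRevolution]

end Geometry

section Volume

variable [FiniteDimensional ℝ E] [MeasurableSpace E] [BorelSpace E] (F : Submodule ℝ E)

theorem measurableSet_bodyOfRevolution (c : E) (a : ℝ) {r : ℝ → ℝ} (hr : Measurable r) :
    MeasurableSet (bodyOfRevolution F c a r) := by
  have hslab : MeasurableSet {x | ‖Fᗮ.starProjection (x - c)‖ ≤ a} :=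
    measurableSet_le (by fun_prop) measurable_const
  have hprofile : MeasurableSet
      {x | ‖F.starProjection (x - c)‖ ≤ r ‖Fᗮ.starProjection (x - c)‖} :=
    measurableSet_le (by fun_prop) (by fun_prop)
  exact hslab.inter hprofile

theorem volume_eq_lintegral_volume_slice (c : E) {S : Set E} (hS : MeasurableSet S) :
    volume S = ∫⁻ z : Fᗮ, volume {y : F | (y + z : E) + c ∈ S} := by
  have hprod := (F.measurePreserving_measurableEquivProd c).symm
  rw [InnerProductSpace.euclideanHausdorffMeasure_eq_volume] at hprod
  rw [← hprod.measure_preimage_equiv, Measure.volume_eq_prod,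
    Measure.prod_apply_symm ((F.measurableEquivProd c).symm.measurable hS)]
  simp [preimage]

/-- The volume of the unit ball of `F` times the area of the unit sphere of `Fᗮ`: the constant
relating the volume of a body of revolution around `Fᗮ` to the integral of its profile. -/
noncomputable def revolutionFactor : ℝ :=
  volume.real (ball (0 : F) 1) * (finrank ℝ Fᗮ * volume.real (ball (0 : Fᗮ) 1))

theorem revolutionFactor_pos [Nontrivial Fᗮ] : 0 < revolutionFactor F := by
  have hball (K : Submodule ℝ E) : 0 < volume.real (ball (0 : K) 1) :=
    ENNReal.toReal_pos (measure_ball_pos _ _ one_pos).ne' measure_ball_lt_top.ne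
  exact mul_pos (hball F) (mul_pos (Nat.cast_pos.mpr finrank_pos) (hball Fᗮ))

theorem volume_real_bodyOfRevolution_eq_integral (c : E) (a : ℝ) {r : ℝ → ℝ}
    (hr : Measurable r) (hr₀ : ∀ s, 0 ≤ r s) :
    volume.real (bodyOfRevolution F c a r) = volume.real (ball (0 : F) 1) *
      ∫ z : Fᗮ, (Iic a).indicator (fun s ↦ r s ^ finrank ℝ F) ‖z‖ := by
  have hslice (z : Fᗮ) : volume {y : F | (y + z : E) + c ∈ bodyOfRevolution F c a r} =
      ENNReal.ofReal ((Iic a).indicator (fun s ↦ r s ^ finrank ℝ F) ‖z‖) *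
        volume (ball (0 : F) 1) := by
    rw [slice_bodyOfRevolution]
    split_ifs with hz
    · rw [indicator_of_mem (mem_Iic.mpr hz), Measure.addHaar_closedBall _ _ (hr₀ _)]
    · rw [indicator_of_notMem (notMem_Iic.mpr (not_le.mp hz))]
      simp
  have hmeas : Measurable ((Iic a).indicator fun s ↦ r s ^ finrank ℝ F) :=
    (hr.pow_const _).indicator measurableSet_Iic
  have hnonneg (s : ℝ) : 0 ≤ (Iic a).indicator (fun s ↦ r s ^ finrank ℝ F) s :=
    indicator_nonneg (fun s _ ↦ pow_nonneg (hr₀ s) _) s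
  rw [measureReal_def,
    volume_eq_lintegral_volume_slice F c (measurableSet_bodyOfRevolution F c a hr)]
  simp_rw [hslice]
  rw [lintegral_mul_const _ (by fun_prop), ENNReal.toReal_mul, mul_comm, measureReal_def,
    integral_eq_lintegral_of_nonneg_ae (.of_forall fun z ↦ hnonneg ‖z‖)
      (hmeas.comp measurable_norm).aestronglyMeasurable]

theorem volume_real_bodyOfRevolution {k : ℕ} (hk : finrank ℝ Fᗮ = k + 1) (c : E) {a : ℝ}
    (ha : 0 ≤ a) {r : ℝ → ℝ} (hr : Measurable r) (hr₀ : ∀ s, 0 ≤ r s) :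
    volume.real (bodyOfRevolution F c a r) =
      revolutionFactor F * ∫ s in (0 : ℝ)..a, s ^ k * r s ^ finrank ℝ F := by
  have : Nontrivial Fᗮ := nontrivial_of_finrank_eq_succ hk
  rw [volume_real_bodyOfRevolution_eq_integral F c a hr hr₀,
    integral_fun_norm_addHaar volume ((Iic a).indicator fun s ↦ r s ^ finrank ℝ F),
    revolutionFactor, intervalIntegral.integral_of_le ha, ← Ioi_inter_Iic,
    ← setIntegral_indicator measurableSet_Iic, hk, Nat.add_sub_cancel]
  simp only [nsmul_eq_mul, smul_eq_mul, indicator_mul_right, mul_assoc]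

end Volume

section Integrals

theorem sqrt_sq_sub_sq_eq_mul_sqrt_one_sub_div_sq {τ : ℝ} (hτ : 0 < τ) (s : ℝ) :
    √(τ ^ 2 - s ^ 2) = τ * √(1 - (s / τ) ^ 2) := by
  rw [← Real.sqrt_sq hτ.le, ← Real.sqrt_mul (sq_nonneg τ), Real.sqrt_sq hτ.le]
  congr 1
  field_simp

theorem integral_pow_mul_sqrt_sq_sub_sq_pow (k m : ℕ) {τ : ℝ} (hτ : 0 < τ) (b : ℝ) :
    ∫ s in (0 : ℝ)..b, s ^ k * √(τ ^ 2 - s ^ 2) ^ m =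
      τ ^ (k + m + 1) * ∫ u in (0 : ℝ)..(b / τ), u ^ k * √(1 - u ^ 2) ^ m := by
  have hscale (u : ℝ) : (τ * u) ^ k * √(τ ^ 2 - (τ * u) ^ 2) ^ m =
      τ ^ (k + m) * (u ^ k * √(1 - u ^ 2) ^ m) := by
    rw [sqrt_sq_sub_sq_eq_mul_sqrt_one_sub_div_sq hτ, mul_div_cancel_left₀ u hτ.ne']
    ring
  have hsubst := intervalIntegral.mul_integral_comp_mul_left (a := 0) (b := b / τ)
    (f := fun s ↦ s ^ k * √(τ ^ 2 - s ^ 2) ^ m) (c := τ)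
  simp only [hscale, intervalIntegral.integral_const_mul, mul_zero,
    mul_div_cancel₀ b hτ.ne'] at hsubst
  rw [← hsubst]
  ring

theorem integral_sin_pow_succ_mul_cos_pow (k m : ℕ) :
    ∫ θ in (0 : ℝ)..(π / 2), sin θ ^ (m + 1) * cos θ ^ k =
      ∫ u in (0 : ℝ)..1, u ^ k * √(1 - u ^ 2) ^ m := by
  have hsubst := intervalIntegral.integral_comp_mul_deriv (a := 0) (b := π / 2)
    (f := cos) (f' := fun θ ↦ -sin θ) (g := fun u ↦ u ^ k * √(1 - u ^ 2) ^ m)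
    (fun θ _ ↦ hasDerivAt_cos θ) (by fun_prop) (by fun_prop)
  rw [cos_zero, cos_pi_div_two, intervalIntegral.integral_symm 0 1] at hsubst
  rw [← neg_inj, ← hsubst, ← intervalIntegral.integral_neg]
  refine intervalIntegral.integral_congr fun θ hθ ↦ ?_
  rw [uIcc_of_le pi_div_two_pos.le] at hθ
  have hsin : √(1 - cos θ ^ 2) = sin θ := by
    rw [← sin_sq, Real.sqrt_sq (sin_nonneg_of_nonneg_of_le_pi hθ.1 (by linarith [hθ.2, pi_pos]))]
  simp only [Function.comp_apply, hsin]
  ring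

theorem integral_pow_mul_one_sub_sq_rpow (k m : ℕ) {b : ℝ} (hb₀ : 0 ≤ b) (hb₁ : b ≤ 1) :
    ∫ u in (0 : ℝ)..b, u ^ k * (1 - u ^ 2) ^ ((m : ℝ) / 2) =
      ∫ u in (0 : ℝ)..b, u ^ k * √(1 - u ^ 2) ^ m := by
  refine intervalIntegral.integral_congr fun u hu ↦ ?_
  rw [uIcc_of_le hb₀] at hu
  have hu_sq : u ^ 2 ≤ 1 := pow_le_one₀ hu.1 (hu.2.trans hb₁)
  simp only [Real.rpow_div_two_eq_sqrt _ (sub_nonneg.mpr hu_sq), Real.rpow_natCast]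

end Integrals

section DetectionRate

variable [FiniteDimensional ℝ E] [MeasurableSpace E] [BorelSpace E] (F : Submodule ℝ E)

theorem volume_real_closedBall_eq_revolutionFactor_mul {k : ℕ}
    (hk : finrank ℝ Fᗮ = k + 1) (c : E) {τ : ℝ} (hτ : 0 < τ) :
    volume.real (closedBall c τ) = revolutionFactor F * τ ^ (k + finrank ℝ F + 1) *
      ∫ θ in (0 : ℝ)..(π / 2), sin θ ^ (finrank ℝ F + 1) * cos θ ^ k := by
  rw [closedBall_eq_bodyOfRevolution F c hτ.le,
    volume_real_bodyOfRevolution F hk c hτ.le (by fun_prop) (fun _ ↦ Real.sqrt_nonneg _),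
    integral_pow_mul_sqrt_sq_sub_sq_pow k _ hτ, div_self hτ.ne',
    integral_sin_pow_succ_mul_cos_pow, mul_assoc]

theorem volume_real_setOf_starProjection_notMem_closedBall {k : ℕ}
    (hk : finrank ℝ Fᗮ = k + 1) {c : E} {δ τ : ℝ} (hτ : 0 < τ)
    (hδ : dist c (F.starProjection c) = δ) (hδτ : δ ≤ τ) :
    volume.real {x ∈ closedBall c τ | F.starProjection x ∉ closedBall c τ} =
      revolutionFactor F * τ ^ (k + finrank ℝ F + 1) *
        ((∫ u in (0 : ℝ)..(δ / τ), u ^ k * √(1 - u ^ 2) ^ finrank ℝ F) -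
          (δ / τ) ^ (k + 1) / (k + 1) * √(1 - (δ / τ) ^ 2) ^ finrank ℝ F) := by
  have hδ₀ : 0 ≤ δ := hδ ▸ dist_nonneg
  have hsub : bodyOfRevolution F c δ (fun _ ↦ √(τ ^ 2 - δ ^ 2)) ⊆
      bodyOfRevolution F c δ fun s ↦ √(τ ^ 2 - s ^ 2) :=
    bodyOfRevolution_mono F c fun _ ⟨hs₀, hsδ⟩ ↦ by gcongr
  have hfin : volume (bodyOfRevolution F c δ fun s ↦ √(τ ^ 2 - s ^ 2)) ≠ ⊤ := by
    rw [bodyOfRevolution_sqrt_sub_sq F c hτ.le hδτ]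
    exact measure_ne_top_of_subset (sep_subset _ _) measure_closedBall_lt_top.ne
  have hpow : δ ^ (k + 1) = τ ^ (k + 1) * (δ / τ) ^ (k + 1) := by
    rw [← mul_pow, mul_div_cancel₀ δ hτ.ne']
  rw [setOf_starProjection_notMem_closedBall F hδ hδτ, measureReal_sdiff hsub
      (measurableSet_bodyOfRevolution F c δ measurable_const) hfin,
    volume_real_bodyOfRevolution F hk c hδ₀ (by fun_prop) (fun _ ↦ Real.sqrt_nonneg _),
    volume_real_bodyOfRevolution F hk c hδ₀ measurable_const (fun _ ↦ Real.sqrt_nonneg _),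
    intervalIntegral.integral_mul_const, integral_pow, hpow,
    integral_pow_mul_sqrt_sq_sub_sq_pow k _ hτ, sqrt_sq_sub_sq_eq_mul_sqrt_one_sub_div_sq hτ]
  ring

theorem detection_rate_formula'_general {k : ℕ} (hk : finrank ℝ Fᗮ = k + 1) {c : E} {δ τ : ℝ}
    (hτ : 0 < τ) (hδ : dist c (F.starProjection c) = δ) (hδτ : δ ≤ τ) :
    (volume {x ∈ closedBall c τ | F.starProjection x ∉ closedBall c τ} /
        volume (closedBall c τ)).toReal =
      (1 / ∫ θ in (0 : ℝ)..(π / 2), sin θ ^ (finrank ℝ F + 1) * cos θ ^ k) *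
        ((∫ u in (0 : ℝ)..(δ / τ), u ^ k * (1 - u ^ 2) ^ ((finrank ℝ F : ℝ) / 2)) -
          (δ / τ) ^ (k + 1) / (k + 1) * (1 - δ ^ 2 / τ ^ 2) ^ ((finrank ℝ F : ℝ) / 2)) := by
  have : Nontrivial Fᗮ := nontrivial_of_finrank_eq_succ hk
  have hδ₀ : 0 ≤ δ / τ := div_nonneg (hδ ▸ dist_nonneg) hτ.le
  have hδ₁ : δ / τ ≤ 1 := (div_le_one hτ).mpr hδτ
  have hfactor : revolutionFactor F * τ ^ (k + finrank ℝ F + 1) ≠ 0 :=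
    (mul_pos (revolutionFactor_pos F) (pow_pos hτ _)).ne'
  rw [ENNReal.toReal_div, ← measureReal_def, ← measureReal_def,
    volume_real_closedBall_eq_revolutionFactor_mul F hk c hτ,
    volume_real_setOf_starProjection_notMem_closedBall F hk hτ hδ hδτ,
    mul_div_mul_left _ _ hfactor, integral_pow_mul_one_sub_sq_rpow k _ hδ₀ hδ₁, ← div_pow,
    Real.rpow_div_two_eq_sqrt _ (sub_nonneg.mpr (pow_le_one₀ hδ₀ hδ₁)), Real.rpow_natCast,
    one_div_mul_eq_div]

end DetectionRate

section CoordinateHyperplane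

variable {ι : Type*} [Fintype ι] [DecidableEq ι]

theorem starProjection_orthogonal_span_single (i : ι) (x : EuclideanSpace ℝ ι) :
    (ℝ ∙ EuclideanSpace.single i (1 : ℝ))ᗮ.starProjection x =
      x - x i • EuclideanSpace.single i (1 : ℝ) := by
  rw [Submodule.starProjection_orthogonal_val,
    Submodule.starProjection_unit_singleton ℝ (by simp)]
  simp [EuclideanSpace.inner_single_left]

theorem dist_starProjection_orthogonal_span_single (i : ι) (x : EuclideanSpace ℝ ι) :
    dist x ((ℝ ∙ EuclideanSpace.single i (1 : ℝ))ᗮ.starProjection x) = |x i| := by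
  rw [starProjection_orthogonal_span_single]
  simp [norm_smul]

theorem finrank_orthogonal_span_single_add_one (i : ι) :
    finrank ℝ (ℝ ∙ EuclideanSpace.single i (1 : ℝ))ᗮ + 1 = Fintype.card ι := by
  rw [← finrank_span_singleton (K := ℝ) (v := EuclideanSpace.single i (1 : ℝ)) (by simp),
    add_comm, Submodule.finrank_add_finrank_orthogonal, finrank_euclideanSpace]

theorem finrank_orthogonal_orthogonal_span_single (i : ι) :
    finrank ℝ (ℝ ∙ EuclideanSpace.single i (1 : ℝ))ᗮᗮ = 1 := by
  rw [Submodule.orthogonal_orthogonal, finrank_span_singleton (by simp)]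

end CoordinateHyperplane

/-- Prior-uniform detection rate, alternative form: with `F = {x : x₀ = 0}`,
`c = δ·e₀`, `B = closedBall(c, τ)` and `π(x) = x − x₀·e₀`, for `0 < δ ≤ τ`,
`volume {x ∈ B : π(x) ∉ B} / volume B
  = (1/Wₙ)·(∫₀^{δ/τ} (1 − u²)^{(n−1)/2} du − (δ/τ)·(1 − δ²/τ²)^{(n−1)/2})`. -/
theorem detection_rate_formula' {n : ℕ} (hn : 1 ≤ n) (δ τ : ℝ) (hδ : 0 < δ) (hδτ : δ ≤ τ) :
    let e₀ : EuclideanSpace ℝ (Fin n) := EuclideanSpace.single ⟨0, hn⟩ 1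
    let c : EuclideanSpace ℝ (Fin n) := δ • e₀
    let B : Set (EuclideanSpace ℝ (Fin n)) := Metric.closedBall c τ
    let proj : EuclideanSpace ℝ (Fin n) → EuclideanSpace ℝ (Fin n) :=
      fun x => x - x ⟨0, hn⟩ • e₀
    let W : ℝ := ∫ θ in (0:ℝ)..(Real.pi / 2), Real.sin θ ^ n
    (volume {x ∈ B | proj x ∉ B} / volume B).toReal =
      (1 / W) *
        ((∫ u in (0:ℝ)..(δ / τ), (1 - u ^ 2) ^ (((n : ℝ) - 1) / 2))
          - (δ / τ) * (1 - δ ^ 2 / τ ^ 2) ^ (((n : ℝ) - 1) / 2)) := by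
  intro e₀ c B proj W
  have hproj : proj = (ℝ ∙ e₀)ᗮ.starProjection :=
    funext fun x ↦ (starProjection_orthogonal_span_single _ x).symm
  have hdist : dist c ((ℝ ∙ e₀)ᗮ.starProjection c) = δ := by
    rw [dist_starProjection_orthogonal_span_single]
    simp [c, e₀, abs_of_pos hδ]
  have hrank : finrank ℝ (ℝ ∙ e₀)ᗮ + 1 = n := by
    simpa using finrank_orthogonal_span_single_add_one (⟨0, hn⟩ : Fin n)
  have hrank_cast : (finrank ℝ (ℝ ∙ e₀)ᗮ : ℝ) = n - 1 :=
    eq_sub_of_add_eq (by exact_mod_cast hrank)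
  have hrate := detection_rate_formula'_general (ℝ ∙ e₀)ᗮ (k := 0)
    (finrank_orthogonal_orthogonal_span_single _) (hδ.trans_le hδτ) hdist hδτ
  simpa only [hproj, hrank, hrank_cast, pow_zero, one_mul, mul_one, zero_add, pow_one,
    Nat.cast_zero, div_one] using hrate
end
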